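/- arXiv:1312.0101 — 3 statements merged into one kernel-verified Lean document; each statement's English description precedes it below -/
import Mathlib

section
/- Let Ω and ω be as in the context. Then for all 0 < a < b < 1: ∫_b^1 ω dx < ((1−b)/(b−a)) (1/a)^{n−1} ∫_a^b ω dx and ∫_0^a ω dx < (a/(b−a)) (1/(1−b))^{n−1} ∫_a^b ω dx. Consequently ∫_0^1 ω dx < C(a,b) ∫_a^b ω dx, where C(a,b) = (1/(b−a)) [ (1/a)^{n−1}(1−b) + (1/(1−b))^{n−1} a ] + 1. -/
open MeasureTheory Set Filter Topology RealInnerProductSpace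

noncomputable section

/-- The point `(x, y) ∈ ℝ × ℝ^m ≅ ℝ^{m+1}`. -/
def mkPt (m : ℕ) (x : ℝ) (y : EuclideanSpace ℝ (Fin m)) : EuclideanSpace ℝ (Fin (m+1)) :=
  (EuclideanSpace.equiv (Fin (m+1)) ℝ).symm (Fin.cons x ((EuclideanSpace.equiv (Fin m) ℝ) y))

/-- The cross-section `Ω(s) = {y : (s, y) ∈ Ω}`. -/
def cross {m : ℕ} (Ω : Set (EuclideanSpace ℝ (Fin (m+1)))) (s : ℝ) :
    Set (EuclideanSpace ℝ (Fin m)) := {y | mkPt m s y ∈ Ω}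

/-- `ω(s)`: the (n-1)-dimensional volume of the cross-section `Ω(s)`. -/
def ωvol {m : ℕ} (Ω : Set (EuclideanSpace ℝ (Fin (m+1)))) (s : ℝ) : ℝ :=
  (volume (cross Ω s)).toReal

/-- The Laplacian, as the sum of the pure second derivatives along the standard basis. -/
def lap {k : ℕ} (u : EuclideanSpace ℝ (Fin k) → ℝ) (p : EuclideanSpace ℝ (Fin k)) : ℝ :=
  ∑ i, fderiv ℝ (fun q => fderiv ℝ u q (EuclideanSpace.single i 1)) p (EuclideanSpace.single i 1)

/-- The cross-sectional average `ū(x)` of `u`. -/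
def ubarFn {m : ℕ} (Ω : Set (EuclideanSpace ℝ (Fin (m+1))))
    (u : EuclideanSpace ℝ (Fin (m+1)) → ℝ) (x : ℝ) : ℝ :=
  (∫ y in cross Ω x, u (mkPt m x y)) / ωvol Ω x

/-!
By convexity `Ω` contains the cone with apex any point of the section over `p` and base the section
over `z`, so `ω(x) / (x - p)ᵐ` is antitone in `x` on `(p, 1)`. Letting `p → 0`, `ω(x) / xᵐ` is
antitone on `(0, 1)`. Hence `ω` is at most `ω(b) / bᵐ` to the right of `b` and more than
`ω(b) (a / b)ᵐ` on `(a, b)`, which is the first inequality. The second is the first applied to the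
mirror image of `Ω`, and the third adds the two to `∫_a^b ω`.
-/

section MonotoneQuotient

variable {f φ : ℝ → ℝ} {a b c : ℝ}

lemma intervalIntegrable_of_antitoneOn_div (hac : a ≤ c) (hφ : MonotoneOn φ (Icc a c))
    (hφa : 0 < φ a) (hf₀ : ∀ x ∈ Ico a c, 0 ≤ f x)
    (hf : AntitoneOn (fun x => f x / φ x) (Ico a c)) : IntervalIntegrable f volume a c := by
  have φ_pos : ∀ x ∈ Icc a c, 0 < φ x := fun x hx =>
    hφa.trans_le (hφ (left_mem_Icc.2 hac) hx hx.1)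
  have f_eq : EqOn (fun x => φ x * (f x / φ x)) f (Ioo a c) := fun x hx =>
    mul_div_cancel₀ (f x) (φ_pos x (Ioo_subset_Icc_self hx)).ne'
  have f_meas : AEMeasurable f (volume.restrict (Ioo a c)) :=
    ((aemeasurable_restrict_of_monotoneOn measurableSet_Ioo (hφ.mono Ioo_subset_Icc_self)).mul
      (aemeasurable_restrict_of_antitoneOn measurableSet_Ioo (hf.mono Ioo_subset_Ico_self))).congr
      (ae_restrict_of_forall_mem measurableSet_Ioo f_eq)
  rw [intervalIntegrable_iff_integrableOn_Ioo_of_le hac]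
  refine IntegrableOn.of_bound measure_Ioo_lt_top f_meas.aestronglyMeasurable (φ c * (f a / φ a))
    (ae_restrict_of_forall_mem measurableSet_Ioo fun x hx => ?_)
  have hx' := Ioo_subset_Ico_self hx
  have ha : a ∈ Ico a c := left_mem_Ico.2 (hx.1.trans hx.2)
  calc ‖f x‖ = φ x * (f x / φ x) := (Real.norm_of_nonneg (hf₀ x hx')).trans (f_eq hx).symm
    _ ≤ φ c * (f a / φ a) :=
      mul_le_mul (hφ (Ico_subset_Icc_self hx') (right_mem_Icc.2 hac) hx.2.le) (hf ha hx' hx.1.le)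
        (div_nonneg (hf₀ x hx') (φ_pos x (Ico_subset_Icc_self hx')).le)
        (φ_pos c (right_mem_Icc.2 hac)).le

lemma integral_le_of_antitoneOn_div (hbc : b < c) (hφ : MonotoneOn φ (Icc b c)) (hφb : 0 < φ b)
    (hfi : IntervalIntegrable f volume b c) (hfb : 0 ≤ f b)
    (hf : AntitoneOn (fun x => f x / φ x) (Ico b c)) :
    ∫ x in b..c, f x ≤ (c - b) * (φ c * (f b / φ b)) := by
  rw [← smul_eq_mul (c - b), ← intervalIntegral.integral_const]
  refine intervalIntegral.integral_mono_on_of_le_Ioo hbc.le hfi intervalIntegrable_const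
    fun x hx => ?_
  have φ_pos : 0 < φ x := hφb.trans_le
    (hφ (left_mem_Icc.2 hbc.le) (Ioo_subset_Icc_self hx) hx.1.le)
  calc f x = φ x * (f x / φ x) := (mul_div_cancel₀ _ φ_pos.ne').symm
    _ ≤ φ x * (f b / φ b) :=
      mul_le_mul_of_nonneg_left (hf (left_mem_Ico.2 hbc) (Ioo_subset_Ico_self hx) hx.1.le) φ_pos.le
    _ ≤ φ c * (f b / φ b) :=
      mul_le_mul_of_nonneg_right (hφ (Ioo_subset_Icc_self hx) (right_mem_Icc.2 hbc.le) hx.2.le)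
        (div_nonneg hfb hφb.le)

lemma lt_integral_of_antitoneOn_div (hab : a < b) (hφ : StrictMonoOn φ (Icc a b)) (hφa : 0 < φ a)
    (hfi : IntervalIntegrable f volume a b) (hfb : 0 < f b)
    (hf : AntitoneOn (fun x => f x / φ x) (Icc a b)) :
    (b - a) * (φ a * (f b / φ b)) < ∫ x in a..b, f x := by
  rw [← smul_eq_mul (b - a), ← intervalIntegral.integral_const, ← sub_pos,
    ← intervalIntegral.integral_sub hfi intervalIntegrable_const]
  refine intervalIntegral.intervalIntegral_pos_of_pos_on (hfi.sub intervalIntegrable_const)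
    (fun x hx => sub_pos.2 ?_) hab
  have hx' := Ioo_subset_Icc_self hx
  have φ_lt : φ a < φ x := hφ (left_mem_Icc.2 hab.le) hx' hx.1
  have φb_pos : 0 < φ b := hφa.trans (hφ (left_mem_Icc.2 hab.le) (right_mem_Icc.2 hab.le) hab)
  calc φ a * (f b / φ b) < φ x * (f b / φ b) := mul_lt_mul_of_pos_right φ_lt (div_pos hfb φb_pos)
    _ ≤ φ x * (f x / φ x) :=
      mul_le_mul_of_nonneg_left (hf hx' (right_mem_Icc.2 hab.le) hx.2.le) (hφa.trans φ_lt).le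
    _ = f x := mul_div_cancel₀ _ (hφa.trans φ_lt).ne'

theorem integral_lt_mul_integral_of_antitoneOn_div (hab : a < b) (hbc : b < c)
    (hφ : StrictMonoOn φ (Icc a c)) (hφa : 0 < φ a) (hfi : IntervalIntegrable f volume a c)
    (hfb : 0 < f b) (hf : AntitoneOn (fun x => f x / φ x) (Ico a c)) :
    ∫ x in b..c, f x < (c - b) / (b - a) * (φ c / φ a) * ∫ x in a..b, f x := by
  have hac := hab.trans hbc
  have hφb : φ a < φ b := hφ (left_mem_Icc.2 hac.le) ⟨hab.le, hbc.le⟩ hab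
  have hφc : φ a < φ c := hφ (left_mem_Icc.2 hac.le) (right_mem_Icc.2 hac.le) hac
  have hfi_left := hfi.mono_set (uIcc_subset_uIcc_left (mem_uIcc_of_le hab.le hbc.le))
  have hfi_right := hfi.mono_set (uIcc_subset_uIcc_right (mem_uIcc_of_le hab.le hbc.le))
  have upper := integral_le_of_antitoneOn_div hbc (hφ.mono (Icc_subset_Icc_left hab.le)).monotoneOn
    (hφa.trans hφb) hfi_right hfb.le (hf.mono (Ico_subset_Ico_left hab.le))
  have lower := lt_integral_of_antitoneOn_div hab (hφ.mono (Icc_subset_Icc_right hbc.le)) hφa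
    hfi_left hfb (hf.mono (Icc_subset_Ico_right hbc))
  have ratio_pos : 0 < (c - b) / (b - a) * (φ c / φ a) :=
    mul_pos (div_pos (sub_pos.2 hbc) (sub_pos.2 hab)) (div_pos (hφa.trans hφc) hφa)
  calc ∫ x in b..c, f x ≤ (c - b) * (φ c * (f b / φ b)) := upper
    _ = (c - b) / (b - a) * (φ c / φ a) * ((b - a) * (φ a * (f b / φ b))) := by
      have := (sub_pos.2 hab).ne'
      field_simp
    _ < _ := mul_lt_mul_of_pos_left lower ratio_pos

end MonotoneQuotient

lemma homothety_image_section_subset {E : Type*} [AddCommGroup E] [Module ℝ E]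
    {Ω : Set (ℝ × E)} {p z r : ℝ} {y : E} (hc : Convex ℝ Ω) (hy : (p, y) ∈ Ω)
    (hr : r ∈ Icc (0 : ℝ) 1) :
    AffineMap.homothety y r '' (Prod.mk z ⁻¹' Ω) ⊆ Prod.mk (AffineMap.lineMap p z r) ⁻¹' Ω := by
  rintro _ ⟨x, hx, rfl⟩
  simpa [AffineMap.homothety_eq_lineMap, AffineMap.lineMap_apply] using hc.lineMap_mem hy hx hr

section Sections

variable {E : Type*} [MeasurableSpace E] {μ : Measure E} {Ω : Set (ℝ × E)} {a b c p s z r : ℝ}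

/-- The `μ`-volume `ω(s)` of the section over `s` of a subset of `ℝ × E`, the coordinate-free form
of `ωvol`. A section of infinite measure gets the value `0`, so `0 < sectionVolume μ Ω s` says that
the section is neither null nor of infinite measure. -/
def sectionVolume (μ : Measure E) (Ω : Set (ℝ × E)) (s : ℝ) : ℝ :=
  μ.real (Prod.mk s ⁻¹' Ω)

lemma nonempty_of_sectionVolume_pos (h : 0 < sectionVolume μ Ω s) :
    (Prod.mk s ⁻¹' Ω).Nonempty :=
  nonempty_of_measureReal_ne_zero h.ne'

lemma measure_ne_top_of_sectionVolume_pos (h : 0 < sectionVolume μ Ω s) :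
    μ (Prod.mk s ⁻¹' Ω) ≠ ⊤ :=
  fun h_top => h.ne' (by rw [sectionVolume, measureReal_def, h_top, ENNReal.toReal_top])

variable [NormedAddCommGroup E] [NormedSpace ℝ E]

/-- The reflection `(s, y) ↦ (c - s, y)`, which exchanges the two ends of the slab `(0, c) × E`. -/
def reflectFst (c : ℝ) : ℝ × E →ᵃ[ℝ] ℝ × E :=
  (AffineEquiv.constVSub ℝ c).toAffineMap.prodMap (AffineMap.id ℝ E)

lemma sectionVolume_preimage_reflectFst :
    sectionVolume μ (reflectFst c ⁻¹' Ω) s = sectionVolume μ Ω (c - s) :=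
  rfl

lemma sectionVolume_preimage_reflectFst_pos (hpos : ∀ s ∈ Ioo 0 c, 0 < sectionVolume μ Ω s) :
    ∀ s ∈ Ioo 0 c, 0 < sectionVolume μ (reflectFst c ⁻¹' Ω) s := fun s hs =>
  hpos (c - s) ⟨sub_pos.2 hs.2, sub_lt_self c hs.1⟩

variable [BorelSpace E] [FiniteDimensional ℝ E] [μ.IsAddHaarMeasure]

lemma pow_finrank_mul_sectionVolume_le (hc : Convex ℝ Ω) (hp : (Prod.mk p ⁻¹' Ω).Nonempty)
    (hr : r ∈ Icc (0 : ℝ) 1) (hfin : μ (Prod.mk (AffineMap.lineMap p z r) ⁻¹' Ω) ≠ ⊤) :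
    r ^ Module.finrank ℝ E * sectionVolume μ Ω z
      ≤ sectionVolume μ Ω (AffineMap.lineMap p z r) := by
  obtain ⟨y, hy⟩ := hp
  calc r ^ Module.finrank ℝ E * sectionVolume μ Ω z
      = μ.real (AffineMap.homothety y r '' (Prod.mk z ⁻¹' Ω)) := by
        rw [measureReal_def, Measure.addHaar_image_homothety, ENNReal.toReal_mul,
          ENNReal.toReal_ofReal (abs_nonneg _), abs_of_nonneg (pow_nonneg hr.1 _)]
        rfl
    _ ≤ sectionVolume μ Ω (AffineMap.lineMap p z r) :=
        measureReal_mono (homothety_image_section_subset hc hy hr) hfin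

lemma antitoneOn_sectionVolume_div_sub_pow (hc : Convex ℝ Ω) (hp : (Prod.mk p ⁻¹' Ω).Nonempty)
    (hfin : ∀ s ∈ Ioo p c, μ (Prod.mk s ⁻¹' Ω) ≠ ⊤) :
    AntitoneOn (fun x => sectionVolume μ Ω x / (x - p) ^ Module.finrank ℝ E) (Ioo p c) := by
  intro x hx z hz hxz
  have hxp : 0 < x - p := sub_pos.2 hx.1
  have hzp : 0 < z - p := sub_pos.2 hz.1
  have x_eq : AffineMap.lineMap p z ((x - p) / (z - p)) = x := by
    rw [AffineMap.lineMap_apply_ring', div_mul_cancel₀ _ hzp.ne', sub_add_cancel]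
  have cone_le := pow_finrank_mul_sectionVolume_le (μ := μ) (z := z) (r := (x - p) / (z - p)) hc hp
    ⟨(div_pos hxp hzp).le, (div_le_one hzp).2 (sub_le_sub_right hxz p)⟩ (x_eq.symm ▸ hfin x hx)
  rw [x_eq, div_pow, div_mul_eq_mul_div, mul_div_assoc, mul_comm] at cone_le
  exact (le_div_iff₀ (pow_pos hxp _)).2 cone_le

lemma antitoneOn_sectionVolume_div_pow (hc : Convex ℝ Ω)
    (hpos : ∀ s ∈ Ioo 0 c, 0 < sectionVolume μ Ω s) :
    AntitoneOn (fun x => sectionVolume μ Ω x / x ^ Module.finrank ℝ E) (Ioo 0 c) := by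
  intro x hx z hz hxz
  have tendsto_apex : ∀ t ∈ Ioo 0 c,
      Tendsto (fun p => sectionVolume μ Ω t / (t - p) ^ Module.finrank ℝ E) (𝓝[>] 0)
        (𝓝 (sectionVolume μ Ω t / t ^ Module.finrank ℝ E)) := fun t ht => by
    have : ContinuousAt (fun p => sectionVolume μ Ω t / (t - p) ^ Module.finrank ℝ E) 0 := by
      have : (t - 0) ^ Module.finrank ℝ E ≠ 0 := pow_ne_zero _ (by simpa using ht.1.ne')
      fun_prop (disch := assumption)
    simpa using this.tendsto.mono_left nhdsWithin_le_nhds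
  refine le_of_tendsto_of_tendsto (tendsto_apex z hz) (tendsto_apex x hx) ?_
  filter_upwards [Ioo_mem_nhdsGT hx.1] with p hp
  exact antitoneOn_sectionVolume_div_sub_pow hc
    (nonempty_of_sectionVolume_pos (hpos p ⟨hp.1, hp.2.trans hx.2⟩))
    (fun s hs => measure_ne_top_of_sectionVolume_pos (hpos s ⟨hp.1.trans hs.1, hs.2⟩))
    ⟨hp.2, hx.2⟩ ⟨hp.2.trans_le hxz, hz.2⟩ hxz

lemma intervalIntegrable_sectionVolume_right (hc : Convex ℝ Ω)
    (hpos : ∀ s ∈ Ioo 0 c, 0 < sectionVolume μ Ω s) (ha : 0 < a) (hac : a ≤ c) :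
    IntervalIntegrable (sectionVolume μ Ω) volume a c :=
  intervalIntegrable_of_antitoneOn_div hac
    ((pow_left_monotoneOn (n := Module.finrank ℝ E)).mono fun _ hx => ha.le.trans hx.1)
    (pow_pos ha _) (fun x hx => (hpos x ⟨ha.trans_le hx.1, hx.2⟩).le)
    ((antitoneOn_sectionVolume_div_pow hc hpos).mono fun _ hx => ⟨ha.trans_le hx.1, hx.2⟩)

lemma intervalIntegrable_sectionVolume (hc : Convex ℝ Ω) (hc₀ : 0 < c)
    (hpos : ∀ s ∈ Ioo 0 c, 0 < sectionVolume μ Ω s) :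
    IntervalIntegrable (sectionVolume μ Ω) volume 0 c := by
  have right := intervalIntegrable_sectionVolume_right hc hpos (half_pos hc₀) (half_le_self hc₀.le)
  have left := (intervalIntegrable_sectionVolume_right (hc.affine_preimage (reflectFst c))
    (sectionVolume_preimage_reflectFst_pos hpos) (half_pos hc₀)
    (half_le_self hc₀.le)).comp_sub_left c
  simp only [sectionVolume_preimage_reflectFst, sub_sub_cancel, sub_self, sub_half] at left
  exact left.symm.trans right

variable [Nontrivial E]

theorem integral_sectionVolume_right_lt (hc : Convex ℝ Ω)
    (hpos : ∀ s ∈ Ioo 0 c, 0 < sectionVolume μ Ω s) (ha : 0 < a) (hab : a < b) (hbc : b < c) :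
    ∫ x in b..c, sectionVolume μ Ω x
      < (c - b) / (b - a) * (c / a) ^ Module.finrank ℝ E * ∫ x in a..b, sectionVolume μ Ω x := by
  rw [div_pow]
  exact integral_lt_mul_integral_of_antitoneOn_div hab hbc
    ((pow_left_strictMonoOn₀ Module.finrank_pos.ne').mono fun _ hx => ha.le.trans hx.1)
    (pow_pos ha _)
    (intervalIntegrable_sectionVolume_right hc hpos ha (hab.trans hbc).le)
    (hpos b ⟨ha.trans hab, hbc⟩)
    ((antitoneOn_sectionVolume_div_pow hc hpos).mono fun _ hx => ⟨ha.trans_le hx.1, hx.2⟩)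

theorem integral_sectionVolume_left_lt (hc : Convex ℝ Ω)
    (hpos : ∀ s ∈ Ioo 0 c, 0 < sectionVolume μ Ω s) (ha : 0 < a) (hab : a < b) (hbc : b < c) :
    ∫ x in 0..a, sectionVolume μ Ω x
      < a / (b - a) * (c / (c - b)) ^ Module.finrank ℝ E * ∫ x in a..b, sectionVolume μ Ω x := by
  simpa only [sectionVolume_preimage_reflectFst,
    intervalIntegral.integral_comp_sub_left (sectionVolume μ Ω), sub_self, sub_sub_cancel,
    sub_sub_sub_cancel_left] using
    integral_sectionVolume_right_lt (hc.affine_preimage (reflectFst c))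
      (sectionVolume_preimage_reflectFst_pos hpos) (sub_pos.2 hbc) (sub_lt_sub_left hab c)
      (sub_lt_self c ha)

theorem omega_mass_concentration_general (hc : Convex ℝ Ω)
    (hpos : ∀ s ∈ Ioo 0 1, 0 < sectionVolume μ Ω s) (ha : 0 < a) (hab : a < b) (hb : b < 1) :
    (∫ x in b..1, sectionVolume μ Ω x)
      < ((1 - b) / (b - a)) * (1 / a) ^ Module.finrank ℝ E
        * ∫ x in a..b, sectionVolume μ Ω x ∧
    (∫ x in (0 : ℝ)..a, sectionVolume μ Ω x)
      < (a / (b - a)) * (1 / (1 - b)) ^ Module.finrank ℝ E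
        * ∫ x in a..b, sectionVolume μ Ω x ∧
    (∫ x in (0 : ℝ)..1, sectionVolume μ Ω x)
      < ((1 / (b - a)) * ((1 / a) ^ Module.finrank ℝ E * (1 - b)
          + (1 / (1 - b)) ^ Module.finrank ℝ E * a) + 1)
        * ∫ x in a..b, sectionVolume μ Ω x := by
  have right := integral_sectionVolume_right_lt hc hpos ha hab hb
  have left := integral_sectionVolume_left_lt hc hpos ha hab hb
  have hi {x y : ℝ} (hx : x ∈ Icc 0 1) (hy : y ∈ Icc 0 1) :
      IntervalIntegrable (sectionVolume μ Ω) volume x y :=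
    (intervalIntegrable_sectionVolume hc one_pos hpos).mono_set
      (uIcc_subset_uIcc (Icc_subset_uIcc hx) (Icc_subset_uIcc hy))
  have ha' : a ∈ Icc (0 : ℝ) 1 := ⟨ha.le, (hab.trans hb).le⟩
  have hb' : b ∈ Icc (0 : ℝ) 1 := ⟨(ha.trans hab).le, hb.le⟩
  refine ⟨right, left, ?_⟩
  rw [← intervalIntegral.integral_add_adjacent_intervals (hi (by simp) ha') (hi ha' (by simp)),
    ← intervalIntegral.integral_add_adjacent_intervals (hi ha' hb') (hi hb' (by simp))]
  exact (add_lt_add left (add_lt_add_right right _)).trans_eq (by ring)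

end Sections

section Coordinates

variable {m : ℕ}

lemma isLinearMap_mkPt : IsLinearMap ℝ fun p : ℝ × EuclideanSpace ℝ (Fin m) => mkPt m p.1 p.2 where
  map_add p q := by ext i; refine Fin.cases ?_ (fun j => ?_) i <;> simp [mkPt]
  map_smul k p := by ext i; refine Fin.cases ?_ (fun j => ?_) i <;> simp [mkPt]

lemma isometry_mkPt (s : ℝ) : Isometry (mkPt m s) :=
  Isometry.of_dist_eq fun y z => by
    simp [EuclideanSpace.dist_eq, Fin.sum_univ_succ, mkPt]

lemma ωvol_pos {Ω : Set (EuclideanSpace ℝ (Fin (m + 1)))} {s : ℝ} (ho : IsOpen Ω)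
    (hb : Bornology.IsBounded Ω) (hs : (cross Ω s).Nonempty) : 0 < ωvol Ω s :=
  ENNReal.toReal_pos ((ho.preimage (isometry_mkPt s).continuous).measure_pos volume hs).ne'
    ((isometry_mkPt s).antilipschitz.isBounded_preimage hb).measure_lt_top.ne

lemma sectionVolume_preimage_mkPt (Ω : Set (EuclideanSpace ℝ (Fin (m + 1)))) :
    sectionVolume volume ((fun p : ℝ × EuclideanSpace ℝ (Fin m) => mkPt m p.1 p.2) ⁻¹' Ω)
      = ωvol Ω :=
  rfl

end Coordinates

/-- The mass of `ω` near the ends is controlled by its mass in the middle: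
`∫_b^1 ω < ((1-b)/(b-a))(1/a)^{n-1} ∫_a^b ω`, `∫_0^a ω < (a/(b-a))(1/(1-b))^{n-1} ∫_a^b ω`,
hence `∫_0^1 ω < C(a,b) ∫_a^b ω`. -/
theorem omega_mass_concentration
    (m : ℕ) (hm : 1 ≤ m) (Ω : Set (EuclideanSpace ℝ (Fin (m+1)))) :
      IsOpen Ω → Convex ℝ Ω → Bornology.IsBounded Ω →
      -- Ω ⊆ (0,1) × ℝ^{n-1}
      (∀ x y, mkPt m x y ∈ Ω → x ∈ Ioo (0:ℝ) 1) →
      -- nonempty cross-sections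
      (∀ s ∈ Ioo (0:ℝ) 1, (cross Ω s).Nonempty) →
      ∀ a b : ℝ, 0 < a → a < b → b < 1 →
        (∫ x in b..1, ωvol Ω x)
          < ((1 - b) / (b - a)) * (1 / a) ^ m * ∫ x in a..b, ωvol Ω x ∧
        (∫ x in (0:ℝ)..a, ωvol Ω x)
          < (a / (b - a)) * (1 / (1 - b)) ^ m * ∫ x in a..b, ωvol Ω x ∧
        (∫ x in (0:ℝ)..1, ωvol Ω x)
          < ((1 / (b - a)) * ((1 / a) ^ m * (1 - b) + (1 / (1 - b)) ^ m * a) + 1)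
            * ∫ x in a..b, ωvol Ω x := by
  intro ho hc hb _ hn a b ha hab hb1
  have : Nonempty (Fin m) := Fin.pos_iff_nonempty.1 hm
  simpa only [finrank_euclideanSpace_fin, sectionVolume_preimage_mkPt] using
    omega_mass_concentration_general (μ := volume) (hc.is_linear_preimage isLinearMap_mkPt)
      (fun s hs => ωvol_pos ho hb (hn s hs)) ha hab hb1
end
end

section
/- Let Ω and ω be as in the context, let f : (0,1) → ℝ be continuous and bounded, and suppose there are constants δ₀ ∈ (0,1/2) and c > 0 such that |f(x)| ≥ c · sup_{(0,1)} |f| for all x ∈ [δ₀/2, δ₀]. Then for all 0 < ε ≤ δ₀/2: (sup_{(0,1)} |f|)² · ∫_0^1 ω dx ≤ C ∫_ε^{1−ε} ω f² dx, where C depends only on n, c and δ₀. -/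
open MeasureTheory Set Filter Topology RealInnerProductSpace

noncomputable section

/-!
Let `θ > 0` and `t ∈ [θ, 1 - θ]`. Every `s ∈ (0, 1)` admits `u ∈ (0, 1)` with
`t = (1 - θ) u + θ s`, so convexity puts a copy of `Ω(s)`, shrunk by the factor `θ` towards a point
of `Ω(u)`, inside `Ω(t)`; hence `ω(t) ≥ θ ^ (n - 1) ω(s)`. On `[δ₀/2, δ₀]` the integrand `ω f²` is
therefore at least `θ ^ (n - 1) (c sup |f|)² ω(s)` for every `s`, and integrating over `s` brings in
the mass `∫ ω`.
-/

section Slices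

variable {E F : Type*} [AddCommGroup E] [Module ℝ E]

lemma homothety_image_slice_subset [AddCommGroup F] [Module ℝ F] {A : Set (E × F)}
    (hA : Convex ℝ A) {θ : ℝ} (hθ : θ ∈ Icc 0 1) {u s : E} {q : F} (hq : (u, q) ∈ A) :
    AffineMap.homothety q θ '' (Prod.mk s ⁻¹' A) ⊆ Prod.mk (AffineMap.lineMap u s θ) ⁻¹' A := by
  rintro _ ⟨y, hy, rfl⟩
  have hmem : AffineMap.lineMap (u, q) (s, y) θ ∈ A := hA.lineMap_mem hq hy hθ
  simpa only [AffineMap.lineMap_apply_module, AffineMap.homothety_eq_lineMap, Prod.smul_mk,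
    Prod.mk_add_mk, mem_preimage] using hmem

variable [NormedAddCommGroup F] [NormedSpace ℝ F] [FiniteDimensional ℝ F] [MeasurableSpace F]
  [BorelSpace F] (μ : Measure F) [μ.IsAddHaarMeasure]

lemma ofReal_pow_finrank_mul_measure_slice_le {A : Set (E × F)} (hA : Convex ℝ A) {θ : ℝ}
    (hθ : θ ∈ Icc 0 1) {u : E} (hu : (Prod.mk u ⁻¹' A).Nonempty) (s : E) :
    ENNReal.ofReal (θ ^ Module.finrank ℝ F) * μ (Prod.mk s ⁻¹' A) ≤
      μ (Prod.mk (AffineMap.lineMap u s θ) ⁻¹' A) := by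
  obtain ⟨q, hq⟩ := hu
  calc ENNReal.ofReal (θ ^ Module.finrank ℝ F) * μ (Prod.mk s ⁻¹' A)
      = μ (AffineMap.homothety q θ '' (Prod.mk s ⁻¹' A)) := by
        rw [Measure.addHaar_image_homothety, abs_of_nonneg (pow_nonneg hθ.1 _)]
    _ ≤ μ (Prod.mk (AffineMap.lineMap u s θ) ⁻¹' A) :=
        measure_mono (homothety_image_slice_subset hA hθ hq)

end Slices

lemma exists_mem_Ioo_lineMap_eq {θ s t : ℝ} (hθ : 0 < θ) (hs : s ∈ Ioo 0 1)
    (ht : t ∈ Icc θ (1 - θ)) : ∃ u ∈ Ioo (0 : ℝ) 1, AffineMap.lineMap u s θ = t := by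
  obtain ⟨hs0, hs1⟩ := hs
  obtain ⟨hθt, htθ⟩ := ht
  have hθ1 : 0 < 1 - θ := by linarith
  refine ⟨(t - θ * s) / (1 - θ), ⟨div_pos (by nlinarith) hθ1, ?_⟩, ?_⟩
  · rw [div_lt_one hθ1]
    nlinarith
  · rw [AffineMap.lineMap_apply_module, smul_eq_mul, smul_eq_mul, mul_div_cancel₀ _ hθ1.ne',
      sub_add_cancel]

lemma aemeasurable_measure_slice {X Y : Type*} [MeasurableSpace X] [MeasurableSpace Y]
    {μ : Measure X} {ν : Measure Y} [SFinite ν] {A : Set (X × Y)}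
    (hA : NullMeasurableSet A (μ.prod ν)) : AEMeasurable (fun x ↦ ν (Prod.mk x ⁻¹' A)) μ := by
  obtain ⟨B, hB, hAB⟩ := hA
  refine ⟨fun x ↦ ν (Prod.mk x ⁻¹' B), measurable_measure_prodMk_left hB, ?_⟩
  filter_upwards [Measure.ae_ae_of_ae_prod hAB] with x hx using measure_congr hx

section SliceVolume

variable {F : Type*} [NormedAddCommGroup F] [NormedSpace ℝ F] [FiniteDimensional ℝ F]
  [MeasurableSpace F] [BorelSpace F] {μ : Measure F} [μ.IsAddHaarMeasure] {A : Set (ℝ × F)}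

lemma pow_finrank_mul_measureReal_slice_le (hA : Convex ℝ A)
    (hne : ∀ s ∈ Ioo (0 : ℝ) 1, (Prod.mk s ⁻¹' A).Nonempty) {θ s t : ℝ} (hθ : 0 < θ)
    (hs : s ∈ Ioo 0 1) (ht : t ∈ Icc θ (1 - θ)) (hfin : μ (Prod.mk t ⁻¹' A) ≠ ⊤) :
    θ ^ Module.finrank ℝ F * μ.real (Prod.mk s ⁻¹' A) ≤ μ.real (Prod.mk t ⁻¹' A) := by
  obtain ⟨u, hu, rfl⟩ := exists_mem_Ioo_lineMap_eq hθ hs ht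
  have hθ1 : θ ≤ 1 := by linarith [ht.1, ht.2]
  have hle := ENNReal.toReal_mono hfin
    (ofReal_pow_finrank_mul_measure_slice_le μ hA ⟨hθ.le, hθ1⟩ (hne u hu) s)
  rwa [ENNReal.toReal_mul, ENNReal.toReal_ofReal (by positivity)] at hle

lemma integrableOn_measureReal_slice (hA : Convex ℝ A)
    (hne : ∀ s ∈ Ioo (0 : ℝ) 1, (Prod.mk s ⁻¹' A).Nonempty)
    (hfin : μ (Prod.mk (1 / 2 : ℝ) ⁻¹' A) ≠ ⊤) :
    IntegrableOn (fun s ↦ μ.real (Prod.mk s ⁻¹' A)) (Ioo (0 : ℝ) 1) := by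
  have hmeas : AEMeasurable (fun s : ℝ ↦ μ.real (Prod.mk s ⁻¹' A)) :=
    (aemeasurable_measure_slice (hA.nullMeasurableSet (volume.prod μ))).ennreal_toReal
  have hbound : ∀ s ∈ Ioo (0 : ℝ) 1, ‖μ.real (Prod.mk s ⁻¹' A)‖ ≤
      μ.real (Prod.mk (1 / 2 : ℝ) ⁻¹' A) / (1 / 2) ^ Module.finrank ℝ F := fun s hs ↦ by
    rw [Real.norm_of_nonneg measureReal_nonneg, le_div_iff₀' (by positivity)]
    exact pow_finrank_mul_measureReal_slice_le hA hne one_half_pos hs (by norm_num) hfin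
  exact .of_bound measure_Ioo_lt_top hmeas.aestronglyMeasurable.restrict _
    (ae_restrict_of_forall_mem measurableSet_Ioo hbound)

end SliceVolume

section WeightedIntegral

variable {X : Type*} [MeasurableSpace X] {μ : Measure X} {w f : X → ℝ}

lemma mul_sq_mul_measureReal_le_setIntegral {J K : Set X} {b c : ℝ} (hJ : MeasurableSet J)
    (hJfin : μ J ≠ ⊤) (hJK : J ⊆ K) (hw : ∀ x, 0 ≤ w x) (hc : 0 ≤ c) (hbw : ∀ x ∈ J, b ≤ w x)
    (hcf : ∀ x ∈ J, c ≤ |f x|) (hint : IntegrableOn (fun x ↦ w x * f x ^ 2) K μ) :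
    b * c ^ 2 * μ.real J ≤ ∫ x in K, w x * f x ^ 2 ∂μ := by
  have hpointwise : ∀ x ∈ J, b * c ^ 2 ≤ w x * f x ^ 2 := fun x hx ↦ by
    have hsq : c ^ 2 ≤ f x ^ 2 := sq_abs (f x) ▸ pow_le_pow_left₀ hc (hcf x hx) 2
    exact mul_le_mul (hbw x hx) hsq (sq_nonneg c) (hw x)
  calc b * c ^ 2 * μ.real J ≤ ∫ x in J, w x * f x ^ 2 ∂μ :=
        setIntegral_ge_of_const_le_real hJ hJfin hpointwise (hint.mono_set hJK)
    _ ≤ ∫ x in K, w x * f x ^ 2 ∂μ :=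
        setIntegral_mono_set hint (.of_forall fun x ↦ mul_nonneg (hw x) (sq_nonneg _))
          hJK.eventuallyLE

lemma mul_setIntegral_le_mul_setIntegral_mul_sq {S J K : Set X} {κ c : ℝ}
    (hS : MeasurableSet S) (hSfin : μ S ≠ ⊤) (hJ : MeasurableSet J) (hJfin : μ J ≠ ⊤)
    (hJK : J ⊆ K) (hw : ∀ x, 0 ≤ w x) (hc : 0 ≤ c)
    (hcomp : ∀ s ∈ S, ∀ t ∈ J, κ * w s ≤ w t) (hcf : ∀ t ∈ J, c ≤ |f t|)
    (hwint : IntegrableOn w S μ) (hint : IntegrableOn (fun x ↦ w x * f x ^ 2) K μ) :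
    κ * c ^ 2 * μ.real J * ∫ x in S, w x ∂μ ≤ μ.real S * ∫ x in K, w x * f x ^ 2 ∂μ := by
  calc κ * c ^ 2 * μ.real J * ∫ x in S, w x ∂μ
      = ∫ s in S, κ * w s * c ^ 2 * μ.real J ∂μ := by
        rw [← integral_const_mul]
        exact integral_congr_ae (.of_forall fun s ↦ by ring)
    _ ≤ ∫ _ in S, (∫ x in K, w x * f x ^ 2 ∂μ) ∂μ :=
        setIntegral_mono_on (((hwint.const_mul κ).mul_const _).mul_const _)
          (integrableOn_const hSfin) hS fun s hs ↦
            mul_sq_mul_measureReal_le_setIntegral hJ hJfin hJK hw hc (hcomp s hs) hcf hint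
    _ = μ.real S * ∫ x in K, w x * f x ^ 2 ∂μ := by rw [setIntegral_const, smul_eq_mul]

lemma integrableOn_mul_sq_of_abs_le {S : Set X} {M : ℝ} (hS : MeasurableSet S)
    (hw : IntegrableOn w S μ) (hf : AEStronglyMeasurable f (μ.restrict S))
    (hM : ∀ x ∈ S, |f x| ≤ M) : IntegrableOn (fun x ↦ w x * f x ^ 2) S μ := by
  have hbound : ∀ x ∈ S, ‖f x ^ 2‖ ≤ M ^ 2 := fun x hx ↦ by
    simpa only [norm_pow, Real.norm_eq_abs] using pow_le_pow_left₀ (abs_nonneg _) (hM x hx) 2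
  exact hw.mul_bdd (hf.pow 2) (ae_restrict_of_forall_mem hS hbound)

end WeightedIntegral

lemma isLinearMap_uncurry_mkPt (m : ℕ) : IsLinearMap ℝ (Function.uncurry (mkPt m)) where
  map_add p q := by
    ext i
    refine Fin.cases ?_ (fun j ↦ ?_) i <;> simp [Function.uncurry, mkPt]
  map_smul a p := by
    ext i
    refine Fin.cases ?_ (fun j ↦ ?_) i <;> simp [Function.uncurry, mkPt]

lemma norm_le_norm_mkPt (m : ℕ) (x : ℝ) (y : EuclideanSpace ℝ (Fin m)) : ‖y‖ ≤ ‖mkPt m x y‖ := by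
  rw [EuclideanSpace.norm_eq, EuclideanSpace.norm_eq, Fin.sum_univ_succ]
  exact Real.sqrt_le_sqrt (le_add_of_nonneg_left (sq_nonneg _))

lemma isBounded_cross {m : ℕ} {Ω : Set (EuclideanSpace ℝ (Fin (m + 1)))}
    (hΩ : Bornology.IsBounded Ω) (s : ℝ) : Bornology.IsBounded (cross Ω s) := by
  obtain ⟨R, hR⟩ := hΩ.exists_norm_le
  exact isBounded_iff_forall_norm_le.2 ⟨R, fun y hy ↦ (norm_le_norm_mkPt m s y).trans (hR _ hy)⟩

theorem sup_sq_times_mass_le_weighted_L2_general {F : Type*} [NormedAddCommGroup F]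
    [NormedSpace ℝ F] [FiniteDimensional ℝ F] [MeasurableSpace F] [BorelSpace F]
    (μ : Measure F) [μ.IsAddHaarMeasure] {a b c : ℝ} (ha : 0 < a) (hab : a < b) (hb : b < 1)
    (hc : 0 < c) :
    ∃ C > (0 : ℝ), ∀ (A : Set (ℝ × F)) (f : ℝ → ℝ), Convex ℝ A →
      (∀ s ∈ Ioo (0 : ℝ) 1, (Prod.mk s ⁻¹' A).Nonempty) →
      (∀ s ∈ Ioo (0 : ℝ) 1, μ (Prod.mk s ⁻¹' A) ≠ ⊤) →
      AEStronglyMeasurable f (volume.restrict (Ioo 0 1)) →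
      (∃ M : ℝ, ∀ x ∈ Ioo (0 : ℝ) 1, |f x| ≤ M) →
      (∀ x ∈ Icc a b, c * sSup ((fun t ↦ |f t|) '' Ioo (0 : ℝ) 1) ≤ |f x|) →
      ∀ ε : ℝ, 0 < ε → ε ≤ a → b ≤ 1 - ε →
        (sSup ((fun t ↦ |f t|) '' Ioo (0 : ℝ) 1)) ^ 2 *
            (∫ x in (0 : ℝ)..1, μ.real (Prod.mk x ⁻¹' A))
          ≤ C * ∫ x in ε..(1 - ε), μ.real (Prod.mk x ⁻¹' A) * f x ^ 2 := by
  set θ := min a (1 - b)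
  have hθ : 0 < θ := lt_min ha (sub_pos.2 hb)
  have hD : 0 < θ ^ Module.finrank ℝ F * c ^ 2 * (b - a) :=
    mul_pos (by positivity) (sub_pos.2 hab)
  refine ⟨(θ ^ Module.finrank ℝ F * c ^ 2 * (b - a))⁻¹, inv_pos.2 hD, ?_⟩
  intro A f hA hne hfin hf ⟨M, hM⟩ hlow ε hε hεa hεb
  set S := sSup ((fun t ↦ |f t|) '' Ioo (0 : ℝ) 1)
  have hS : 0 ≤ S := Real.sSup_nonneg (forall_mem_image.2 fun t _ ↦ abs_nonneg (f t))
  have hcomp : ∀ s ∈ Ioo (0 : ℝ) 1, ∀ t ∈ Icc a b,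
      θ ^ Module.finrank ℝ F * μ.real (Prod.mk s ⁻¹' A) ≤ μ.real (Prod.mk t ⁻¹' A) :=
    fun s hs t ht ↦ pow_finrank_mul_measureReal_slice_le hA hne hθ hs
      ⟨(min_le_left _ _).trans ht.1, by linarith [min_le_right a (1 - b), ht.2]⟩
      (hfin t ⟨ha.trans_le ht.1, ht.2.trans_lt hb⟩)
  have hwint := integrableOn_measureReal_slice hA hne (hfin _ (by norm_num))
  have hint := (integrableOn_mul_sq_of_abs_le measurableSet_Ioo hwint hf hM).mono_set
    (Icc_subset_Ioo hε (sub_lt_self 1 hε))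
  have hmain := mul_setIntegral_le_mul_setIntegral_mul_sq measurableSet_Ioo measure_Ioo_lt_top.ne
    measurableSet_Icc measure_Icc_lt_top.ne (Icc_subset_Icc hεa hεb)
    (fun _ ↦ measureReal_nonneg) (by positivity) hcomp hlow hwint hint
  rw [Real.volume_real_Icc_of_le hab.le, Real.volume_real_Ioo_of_le zero_le_one, sub_zero, one_mul,
    ← integral_Ioc_eq_integral_Ioo, ← intervalIntegral.integral_of_le zero_le_one,
    integral_Icc_eq_integral_Ioc, ← intervalIntegral.integral_of_le (by linarith)] at hmain
  rw [le_inv_mul_iff₀ hD]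
  exact hmain.trans_eq' (by ring)

/-- If a bounded continuous `f` on `(0,1)` is at least `c·sup|f|` on a fixed
middle-of-the-left interval `[δ₀/2, δ₀]`, then `(sup|f|)² ∫_0^1 ω ≤ C ∫_ε^{1-ε} ω f²`. -/
theorem sup_sq_times_mass_le_weighted_L2
    (m : ℕ) (hm : 1 ≤ m) (c δ₀ : ℝ) (hc : 0 < c) (hδ₀ : 0 < δ₀) (hδ₀' : δ₀ < 1/2) :
    ∃ C > (0:ℝ), ∀ (Ω : Set (EuclideanSpace ℝ (Fin (m+1)))) (f : ℝ → ℝ),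
      IsOpen Ω → Convex ℝ Ω → Bornology.IsBounded Ω →
      -- Ω ⊆ (0,1) × ℝ^{n-1}
      (∀ x y, mkPt m x y ∈ Ω → x ∈ Ioo (0:ℝ) 1) →
      -- nonempty cross-sections
      (∀ s ∈ Ioo (0:ℝ) 1, (cross Ω s).Nonempty) →
      ContinuousOn f (Ioo 0 1) →
      (∃ M : ℝ, ∀ x ∈ Ioo (0:ℝ) 1, |f x| ≤ M) →
      (∀ x ∈ Icc (δ₀/2) δ₀, c * sSup ((fun t => |f t|) '' Ioo (0:ℝ) 1) ≤ |f x|) →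
      ∀ ε : ℝ, 0 < ε → ε ≤ δ₀/2 →
        (sSup ((fun t => |f t|) '' Ioo (0:ℝ) 1)) ^ 2 * (∫ x in (0:ℝ)..1, ωvol Ω x)
          ≤ C * ∫ x in ε..(1-ε), ωvol Ω x * (f x) ^ 2 := by
  obtain ⟨C, hC, hbound⟩ := sup_sq_times_mass_le_weighted_L2_general
    (volume : Measure (EuclideanSpace ℝ (Fin m))) (half_pos hδ₀) (half_lt_self hδ₀)
    (by linarith : δ₀ < 1) hc
  exact ⟨C, hC, fun Ω f _ hconv hbdd _ hne hf hM hlow ε hε hεδ ↦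
    hbound _ f (hconv.is_linear_preimage (isLinearMap_uncurry_mkPt m)) hne
      (fun s _ ↦ (isBounded_cross hbdd s).measure_lt_top.ne)
      (hf.aestronglyMeasurable measurableSet_Ioo) hM hlow ε hε hεδ (by linarith)⟩
end
end

section
/- Let Ω, ω, u, λ, ū be as in the context. Define ū₁(x) = ū(ε) for x < ε, ū₁(x) = ū(x) for ε ≤ x ≤ 1−ε, ū₁(x) = ū(1−ε) for x > 1−ε; set ū₁⁰ = (∫_0^1 ω ū₁ dx)/(∫_0^1 ω dx) and ū₁^⊥ = ū₁ − ū₁⁰. Then ∫_0^1 ω (ū₁^⊥)² dx ≥ (1 − Cε) ∫_0^1 ω ū² dx, with C depending only on n. -/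
open MeasureTheory Set Filter Topology RealInnerProductSpace

noncomputable section

/-!
The measure `ω(x) dx` on the line is the marginal of Lebesgue measure on `Ω`, and `ū` has mean zero
for it. Write `S = sup |u|`. In the two end zones of width `ε` the gradient of `u` is `O(εS)` and
the relevant points are `O(ε)` apart, so `ū₁` is uniformly within `O(ε²S)` of `ū`. Because
`∫ ω ū = 0`, subtracting a constant from `ū₁` cannot lower the mass by more than this perturbation
does, that is, by `O(ε²S²) ∫ ω`.

Conversely `S² ∫ ω` is controlled by `∫ ω ū²`. By the same gradient bound, `ū` stays above
`(sup u) / 2`, which is comparable to `S`, on an interval of fixed length next to the left end, and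
shrinking `Ω` towards points of its other cross-sections shows that the part of `Ω` over that
interval carries a fixed fraction of the volume.
-/

section Coordinates

variable {m : ℕ}

@[simp] lemma mkPt_apply_zero (x : ℝ) (y : EuclideanSpace ℝ (Fin m)) : mkPt m x y 0 = x := by
  simp [mkPt]

@[simp] lemma mkPt_apply_succ (x : ℝ) (y : EuclideanSpace ℝ (Fin m)) (i : Fin m) :
    mkPt m x y i.succ = y i := by
  simp [mkPt]

lemma smul_mkPt_add_smul_mkPt (a b x x' : ℝ) (y y' : EuclideanSpace ℝ (Fin m)) :
    a • mkPt m x y + b • mkPt m x' y' = mkPt m (a * x + b * x') (a • y + b • y') := by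
  ext i
  refine Fin.cases ?_ (fun j => ?_) i <;> simp

lemma norm_mkPt_sub_mkPt_le (x x' : ℝ) (y y' : EuclideanSpace ℝ (Fin m)) :
    ‖mkPt m x y - mkPt m x' y'‖ ≤ |x - x'| + ‖y - y'‖ := by
  have pythagoras : ‖mkPt m x y - mkPt m x' y'‖ ^ 2 = |x - x'| ^ 2 + ‖y - y'‖ ^ 2 := by
    simp [EuclideanSpace.norm_sq_eq, Fin.sum_univ_succ]
  refine le_of_sq_le_sq ?_ (by positivity)
  rw [pythagoras]
  nlinarith [mul_nonneg (abs_nonneg (x - x')) (norm_nonneg (y - y'))]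

lemma continuous_mkPt :
    Continuous fun z : ℝ × EuclideanSpace ℝ (Fin m) => mkPt m z.1 z.2 := by
  unfold mkPt
  fun_prop

lemma injective_mkPt :
    Function.Injective fun z : ℝ × EuclideanSpace ℝ (Fin m) => mkPt m z.1 z.2 := by
  intro z w h
  refine Prod.ext (by simpa using congr($h 0)) (PiLp.ext fun i => ?_)
  simpa using congr($h i.succ)

lemma measurableEmbedding_mkPt :
    MeasurableEmbedding fun z : ℝ × EuclideanSpace ℝ (Fin m) => mkPt m z.1 z.2 :=
  continuous_mkPt.measurableEmbedding injective_mkPt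

lemma measurePreserving_mkPt :
    MeasurePreserving fun z : ℝ × EuclideanSpace ℝ (Fin m) => mkPt m z.1 z.2 := by
  have hcons := (volume_preserving_piFinSuccAbove (fun _ : Fin (m + 1) => ℝ) 0).symm
  have hofLp := (MeasurePreserving.id (volume : Measure ℝ)).prod
    (EuclideanSpace.volume_preserving_symm_measurableEquiv_toLp (Fin m))
  have htoLp := (EuclideanSpace.volume_preserving_symm_measurableEquiv_toLp (Fin (m + 1))).symm
  convert htoLp.comp (hcons.comp hofLp) using 1
  · ext z i
    refine Fin.cases ?_ (fun j => ?_) i <;> simp [MeasurableEquiv.piFinSuccAbove]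
  · rfl

end Coordinates

section Sections

variable {m : ℕ} {Ω : Set (EuclideanSpace ℝ (Fin (m + 1)))}
  {u : EuclideanSpace ℝ (Fin (m + 1)) → ℝ} {x : ℝ}

/-- The measure `ω(x) dx` on the line: the marginal of Lebesgue measure on `Ω` in the first
coordinate. Its density takes values in `ℝ≥0∞`, unlike `ωvol`. -/
def sectionMeasure (Ω : Set (EuclideanSpace ℝ (Fin (m + 1)))) : Measure ℝ :=
  volume.withDensity fun x => volume (cross Ω x)

lemma isOpen_cross (hΩ : IsOpen Ω) (x : ℝ) : IsOpen (cross Ω x) :=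
  hΩ.preimage (continuous_mkPt.comp (Continuous.prodMk_right x))

lemma measurableSet_cross (hΩ : MeasurableSet Ω) (x : ℝ) : MeasurableSet (cross Ω x) :=
  measurable_prodMk_left (measurableEmbedding_mkPt.measurable hΩ)

lemma measurable_volume_cross (hΩ : MeasurableSet Ω) :
    Measurable fun x => volume (cross Ω x) :=
  measurable_measure_prodMk_left (measurableEmbedding_mkPt.measurable hΩ)

lemma sectionMeasure_univ (hΩ : MeasurableSet Ω) : sectionMeasure Ω univ = volume Ω := by
  rw [sectionMeasure, withDensity_apply _ MeasurableSet.univ, Measure.restrict_univ,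
    ← measurePreserving_mkPt.measure_preimage hΩ.nullMeasurableSet, Measure.volume_eq_prod,
    Measure.prod_apply (measurableEmbedding_mkPt.measurable hΩ)]
  rfl

lemma integral_sectionMeasure (hΩ : MeasurableSet Ω) (hfin : ∀ x, volume (cross Ω x) ≠ ⊤)
    (φ : ℝ → ℝ) : ∫ x, φ x ∂sectionMeasure Ω = ∫ x, ωvol Ω x * φ x :=
  integral_withDensity_eq_integral_toReal_smul (measurable_volume_cross hΩ)
    (Eventually.of_forall fun x => (hfin x).lt_top) φ

lemma setIntegral_cross (hΩ : MeasurableSet Ω) (u : EuclideanSpace ℝ (Fin (m + 1)) → ℝ) (x : ℝ) :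
    ∫ y in cross Ω x, u (mkPt m x y) = ∫ y, Ω.indicator u (mkPt m x y) := by
  rw [← integral_indicator (measurableSet_cross hΩ x)]
  rfl

lemma ubarFn_eq_setAverage (Ω : Set (EuclideanSpace ℝ (Fin (m + 1))))
    (u : EuclideanSpace ℝ (Fin (m + 1)) → ℝ) (x : ℝ) :
    ubarFn Ω u x = ⨍ y in cross Ω x, u (mkPt m x y) := by
  rw [setAverage_eq, smul_eq_mul, ← div_eq_inv_mul]
  rfl

lemma measurable_ubarFn (hΩ : MeasurableSet Ω) (hu : Measurable (Ω.indicator u)) :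
    Measurable (ubarFn Ω u) := by
  unfold ubarFn
  simp_rw [setIntegral_cross hΩ u]
  have hslice := (hu.comp measurableEmbedding_mkPt.measurable).stronglyMeasurable
  exact hslice.integral_prod_right'.measurable.div (measurable_volume_cross hΩ).ennreal_toReal

lemma integral_ubarFn_sectionMeasure (hΩ : MeasurableSet Ω) (hfin : ∀ x, volume (cross Ω x) ≠ ⊤)
    (hu : IntegrableOn u Ω) : ∫ x, ubarFn Ω u x ∂sectionMeasure Ω = ∫ p in Ω, u p := by
  have hslice (x : ℝ) : ωvol Ω x * ubarFn Ω u x = ∫ y, Ω.indicator u (mkPt m x y) := by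
    rw [ubarFn_eq_setAverage, ← setIntegral_cross hΩ]
    exact measure_smul_setAverage _ (hfin x)
  have hint : Integrable (fun z : ℝ × EuclideanSpace ℝ (Fin m) => Ω.indicator u (mkPt m z.1 z.2)) :=
    (measurePreserving_mkPt.integrable_comp_emb measurableEmbedding_mkPt).2
      ((integrable_indicator_iff hΩ).2 hu)
  rw [integral_sectionMeasure hΩ hfin, ← integral_indicator hΩ,
    ← measurePreserving_mkPt.integral_comp measurableEmbedding_mkPt, Measure.volume_eq_prod,
    integral_prod _ hint]
  simp_rw [hslice]

lemma ubarFn_mem_of_forall_mem (hΩ : IsOpen Ω) (hu : ContinuousOn u Ω)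
    (hne : (cross Ω x).Nonempty) (hfin : volume (cross Ω x) ≠ ⊤) {K : Set ℝ} (hK : Convex ℝ K)
    (hKc : IsCompact K) (huK : ∀ y ∈ cross Ω x, u (mkPt m x y) ∈ K) : ubarFn Ω u x ∈ K := by
  have hmeas := measurableSet_cross hΩ.measurableSet x
  have hcont : ContinuousOn (fun y => u (mkPt m x y)) (cross Ω x) :=
    hu.comp (continuous_mkPt.comp (Continuous.prodMk_right x)).continuousOn fun _ hy => hy
  have huK' : ∀ᵐ y ∂volume.restrict (cross Ω x), u (mkPt m x y) ∈ K :=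
    (ae_restrict_iff' hmeas).2 (Eventually.of_forall huK)
  obtain ⟨B, hB⟩ := hKc.isBounded.exists_norm_le
  have hint : IntegrableOn (fun y => u (mkPt m x y)) (cross Ω x) :=
    IntegrableOn.of_bound hfin.lt_top (hcont.aestronglyMeasurable hmeas) B
      (huK'.mono fun _ hy => hB _ hy)
  rw [ubarFn_eq_setAverage]
  exact hK.set_average_mem hKc.isClosed ((isOpen_cross hΩ x).measure_pos _ hne).ne' hfin huK' hint

lemma abs_ubarFn_sub_ubarFn_le (hΩ : IsOpen Ω) (hu : ContinuousOn u Ω) {x' δ : ℝ}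
    (hne : (cross Ω x).Nonempty) (hfin : volume (cross Ω x) ≠ ⊤)
    (hne' : (cross Ω x').Nonempty) (hfin' : volume (cross Ω x') ≠ ⊤)
    (hδ : ∀ y ∈ cross Ω x, ∀ y' ∈ cross Ω x', |u (mkPt m x y) - u (mkPt m x' y')| ≤ δ) :
    |ubarFn Ω u x - ubarFn Ω u x'| ≤ δ := by
  have hpoint : ∀ y' ∈ cross Ω x', ubarFn Ω u x ∈ Metric.closedBall (u (mkPt m x' y')) δ :=
    fun y' hy' => ubarFn_mem_of_forall_mem hΩ hu hne hfin (convex_closedBall _ _)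
      (isCompact_closedBall _ _) fun y hy => hδ y hy y' hy'
  have hmean : ubarFn Ω u x' ∈ Metric.closedBall (ubarFn Ω u x) δ :=
    ubarFn_mem_of_forall_mem hΩ hu hne' hfin' (convex_closedBall _ _)
      (isCompact_closedBall _ _) fun y' hy' => Metric.mem_closedBall_comm.1 (hpoint y' hy')
  exact Metric.mem_closedBall_comm.1 hmean

/-- The homothety of ratio `t` centred at a point of `Ω(x')` maps `Ω(s)` into `Ω(x)`. -/
lemma ofReal_pow_mul_volume_cross_le (hΩ : Convex ℝ Ω) {s x' t : ℝ} (ht₀ : 0 ≤ t)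
    (ht₁ : t ≤ 1) (hne : (cross Ω x').Nonempty) (hx : t * s + (1 - t) * x' = x) :
    ENNReal.ofReal (t ^ m) * volume (cross Ω s) ≤ volume (cross Ω x) := by
  obtain ⟨y', hy'⟩ := hne
  have hsub : AffineMap.homothety y' t '' cross Ω s ⊆ cross Ω x := by
    rintro _ ⟨y, hy, rfl⟩
    have hmem := hΩ hy hy' ht₀ (sub_nonneg.2 ht₁) (add_sub_cancel t 1)
    rwa [smul_mkPt_add_smul_mkPt, hx, add_comm (t • y), ← AffineMap.lineMap_apply_module,
      ← AffineMap.homothety_eq_lineMap] at hmem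
  calc ENNReal.ofReal (t ^ m) * volume (cross Ω s)
      = volume (AffineMap.homothety y' t '' cross Ω s) := by
        simp [Measure.addHaar_image_homothety, abs_of_nonneg ht₀]
    _ ≤ volume (cross Ω x) := measure_mono hsub

end Sections

/-- `Ω` is an open convex subset of the thin cylinder `(0,1) × B(ε)` all of whose cross-sections
over `(0,1)` are nonempty. -/
structure IsThinDomain {m : ℕ} (ε : ℝ) (Ω : Set (EuclideanSpace ℝ (Fin (m + 1)))) : Prop where
  isOpen : IsOpen Ω
  convex : Convex ℝ Ω
  mem_cylinder : ∀ x y, mkPt m x y ∈ Ω →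
    x ∈ Ioo (0 : ℝ) 1 ∧ y ∈ Metric.ball (0 : EuclideanSpace ℝ (Fin m)) ε
  cross_nonempty : ∀ s ∈ Ioo (0 : ℝ) 1, (cross Ω s).Nonempty

namespace IsThinDomain

variable {m : ℕ} {Ω : Set (EuclideanSpace ℝ (Fin (m + 1)))}
  {u : EuclideanSpace ℝ (Fin (m + 1)) → ℝ} {ε x : ℝ}

lemma cross_eq_empty (hΩ : IsThinDomain ε Ω) (hx : x ∉ Ioo 0 1) : cross Ω x = ∅ :=
  eq_empty_iff_forall_notMem.2 fun y hy => hx (hΩ.mem_cylinder x y hy).1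

lemma volume_cross_ne_top (hΩ : IsThinDomain ε Ω) (x : ℝ) : volume (cross Ω x) ≠ ⊤ :=
  measure_ne_top_of_subset (fun y hy => (hΩ.mem_cylinder x y hy).2) measure_ball_lt_top.ne

lemma volume_ne_top (hΩ : IsThinDomain ε Ω) : volume Ω ≠ ⊤ := by
  have hsub : (fun z : ℝ × EuclideanSpace ℝ (Fin m) => mkPt m z.1 z.2) ⁻¹' Ω ⊆
      Ioo 0 1 ×ˢ Metric.ball 0 ε := fun z hz => hΩ.mem_cylinder z.1 z.2 hz
  rw [← measurePreserving_mkPt.measure_preimage hΩ.isOpen.measurableSet.nullMeasurableSet]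
  refine measure_ne_top_of_subset hsub ?_
  rw [Measure.volume_eq_prod, Measure.prod_prod]
  exact ENNReal.mul_ne_top measure_Ioo_lt_top.ne measure_ball_lt_top.ne

lemma isFiniteMeasure_sectionMeasure (hΩ : IsThinDomain ε Ω) :
    IsFiniteMeasure (sectionMeasure Ω) :=
  ⟨by rw [sectionMeasure_univ hΩ.isOpen.measurableSet]; exact hΩ.volume_ne_top.lt_top⟩

lemma measurable_ubarFn (hΩ : IsThinDomain ε Ω) (hu : ContinuousOn u Ω) :
    Measurable (ubarFn Ω u) := by
  classical
  have hind : Measurable (Ω.indicator u) := by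
    rw [← piecewise_eq_indicator]
    exact hu.measurable_piecewise continuousOn_const hΩ.isOpen.measurableSet
  exact _root_.measurable_ubarFn hΩ.isOpen.measurableSet hind

lemma ae_sectionMeasure_mem_Ioo (hΩ : IsThinDomain ε Ω) :
    ∀ᵐ x ∂sectionMeasure Ω, x ∈ Ioo (0 : ℝ) 1 := by
  refine (ae_withDensity_iff (measurable_volume_cross hΩ.isOpen.measurableSet)).2 <|
    Eventually.of_forall fun x hx => ?_
  contrapose! hx
  simp [hΩ.cross_eq_empty hx]

lemma intervalIntegral_ωvol_mul (hΩ : IsThinDomain ε Ω) (φ : ℝ → ℝ) :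
    ∫ x in (0 : ℝ)..1, ωvol Ω x * φ x = ∫ x, φ x ∂sectionMeasure Ω := by
  rw [integral_sectionMeasure hΩ.isOpen.measurableSet hΩ.volume_cross_ne_top,
    intervalIntegral.integral_of_le zero_le_one]
  refine setIntegral_eq_integral_of_forall_compl_eq_zero fun x hx => ?_
  simp [ωvol, hΩ.cross_eq_empty fun h => hx (Ioo_subset_Ioc_self h)]

/-- A homothety of ratio `t` with centre in a suitable cross-section maps `Ω(s)` into `Ω(x)`
for every `s`. -/
lemma ofReal_pow_mul_measure_univ_le (hΩ : IsThinDomain ε Ω) {t : ℝ} (ht : 0 < t)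
    (hx : x ∈ Icc t (1 - t)) :
    ENNReal.ofReal (t ^ m) * sectionMeasure Ω univ ≤ volume (cross Ω x) := by
  have hpoint (s : ℝ) : ENNReal.ofReal (t ^ m) * volume (cross Ω s) ≤
      (Ioo (0 : ℝ) 1).indicator (fun _ => volume (cross Ω x)) s := by
    by_cases hs : s ∈ Ioo (0 : ℝ) 1
    · have ht₁ : 0 < 1 - t := ht.trans_le (hx.1.trans hx.2)
      have hcentre : (x - t * s) / (1 - t) ∈ Ioo (0 : ℝ) 1 := by
        constructor
        · exact div_pos (by nlinarith [hx.1, hs.2]) ht₁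
        · rw [div_lt_one ht₁]
          nlinarith [hx.2, hs.1]
      rw [indicator_of_mem hs]
      refine ofReal_pow_mul_volume_cross_le hΩ.convex ht.le (sub_pos.1 ht₁).le
        (hΩ.cross_nonempty _ hcentre) ?_
      rw [mul_div_cancel₀ _ ht₁.ne', add_sub_cancel]
    · simp [hΩ.cross_eq_empty hs]
  calc ENNReal.ofReal (t ^ m) * sectionMeasure Ω univ
      = ∫⁻ s, ENNReal.ofReal (t ^ m) * volume (cross Ω s) := by
        rw [lintegral_const_mul _ (measurable_volume_cross hΩ.isOpen.measurableSet),
          sectionMeasure, withDensity_apply _ MeasurableSet.univ, Measure.restrict_univ]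
    _ ≤ ∫⁻ s, (Ioo (0 : ℝ) 1).indicator (fun _ => volume (cross Ω x)) s := lintegral_mono hpoint
    _ = volume (cross Ω x) := by simp [lintegral_indicator]

lemma pow_mul_measureReal_univ_mul_volume_le (hΩ : IsThinDomain ε Ω) {t : ℝ} (ht : 0 < t)
    {s : Set ℝ} (hs : MeasurableSet s) (hst : s ⊆ Icc t (1 - t)) :
    t ^ m * (sectionMeasure Ω).real univ * volume.real s ≤ (sectionMeasure Ω).real s := by
  have := hΩ.isFiniteMeasure_sectionMeasure
  have hle : ENNReal.ofReal (t ^ m) * sectionMeasure Ω univ * volume s ≤ sectionMeasure Ω s :=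
    calc ENNReal.ofReal (t ^ m) * sectionMeasure Ω univ * volume s
        = ∫⁻ _ in s, ENNReal.ofReal (t ^ m) * sectionMeasure Ω univ := by
          rw [setLIntegral_const]
      _ ≤ ∫⁻ x in s, volume (cross Ω x) :=
          setLIntegral_mono' hs fun x hx => hΩ.ofReal_pow_mul_measure_univ_le ht (hst hx)
      _ = sectionMeasure Ω s := (withDensity_apply _ hs).symm
  have hreal := ENNReal.toReal_mono (measure_ne_top _ s) hle
  rwa [ENNReal.toReal_mul, ENNReal.toReal_mul, ENNReal.toReal_ofReal (by positivity)] at hreal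

lemma pow_mul_measureReal_univ_mul_sq_le_integral_sq (hΩ : IsThinDomain ε Ω) {t b : ℝ}
    (ht : 0 < t) (ht' : 3 * t ≤ 1) (hb : 0 ≤ b) {f : ℝ → ℝ}
    (hf : Integrable (fun x => f x ^ 2) (sectionMeasure Ω)) (hbf : ∀ x ∈ Icc t (2 * t), b ≤ f x) :
    t ^ (m + 1) * (sectionMeasure Ω).real univ * b ^ 2 ≤ ∫ x, f x ^ 2 ∂sectionMeasure Ω := by
  have := hΩ.isFiniteMeasure_sectionMeasure
  have hmass := hΩ.pow_mul_measureReal_univ_mul_volume_le ht measurableSet_Icc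
    (Icc_subset_Icc_right (by linarith : 2 * t ≤ 1 - t))
  rw [Real.volume_real_Icc_of_le (by linarith)] at hmass
  calc t ^ (m + 1) * (sectionMeasure Ω).real univ * b ^ 2
      = b ^ 2 * (t ^ m * (sectionMeasure Ω).real univ * (2 * t - t)) := by ring
    _ ≤ b ^ 2 * (sectionMeasure Ω).real (Icc t (2 * t)) := by gcongr
    _ ≤ b ^ 2 * (sectionMeasure Ω).real {x | b ^ 2 ≤ f x ^ 2} := by
        gcongr
        · exact measure_ne_top _ _
        · exact fun x hx => pow_le_pow_left₀ hb (hbf x hx) 2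
    _ ≤ ∫ x, f x ^ 2 ∂sectionMeasure Ω :=
        mul_meas_ge_le_integral_of_nonneg (Eventually.of_forall fun x => sq_nonneg (f x)) hf _

lemma abs_sub_le_of_norm_gradient_le (hΩ : IsThinDomain ε Ω) (hu : DifferentiableOn ℝ u Ω)
    {x' K : ℝ} (hK₀ : 0 ≤ K) (hK : ∀ p ∈ Ω, p 0 ∈ uIcc x x' → ‖gradient u p‖ ≤ K)
    {y y' : EuclideanSpace ℝ (Fin m)} (hy : y ∈ cross Ω x) (hy' : y' ∈ cross Ω x') :
    |u (mkPt m x y) - u (mkPt m x' y')| ≤ K * (|x - x'| + 2 * ε) := by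
  have hslab : Convex ℝ (Ω ∩ {p | p 0 ∈ uIcc x x'}) :=
    hΩ.convex.inter ((convex_uIcc x x').linear_preimage
      (EuclideanSpace.proj (𝕜 := ℝ) (0 : Fin (m + 1))).toLinearMap)
  have hmvt := hslab.norm_image_sub_le_of_norm_fderiv_le (𝕜 := ℝ) (f := u) (C := K)
    (fun p hp => hu.differentiableAt (hΩ.isOpen.mem_nhds hp.1))
    (fun p hp => (LinearIsometryEquiv.norm_map _ _).symm.trans_le (hK p hp.1 hp.2))
    ⟨hy', by simp⟩ ⟨hy, by simp⟩
  have hyy' : ‖y - y'‖ ≤ 2 * ε := by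
    have hball := mem_ball_zero_iff.1 (hΩ.mem_cylinder x y hy).2
    have hball' := mem_ball_zero_iff.1 (hΩ.mem_cylinder x' y' hy').2
    linarith [norm_sub_le y y']
  calc |u (mkPt m x y) - u (mkPt m x' y')| ≤ K * ‖mkPt m x y - mkPt m x' y'‖ := hmvt
    _ ≤ K * (|x - x'| + 2 * ε) := by
        gcongr
        exact (norm_mkPt_sub_mkPt_le x x' y y').trans (by gcongr)

lemma abs_ubarFn_sub_le_of_norm_gradient_le (hΩ : IsThinDomain ε Ω) (hu : DifferentiableOn ℝ u Ω)
    {x' K : ℝ} (hK₀ : 0 ≤ K) (hK : ∀ p ∈ Ω, p 0 ∈ uIcc x x' → ‖gradient u p‖ ≤ K)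
    (hx : x ∈ Ioo 0 1) (hx' : x' ∈ Ioo 0 1) :
    |ubarFn Ω u x - ubarFn Ω u x'| ≤ K * (|x - x'| + 2 * ε) :=
  abs_ubarFn_sub_ubarFn_le hΩ.isOpen hu.continuousOn (hΩ.cross_nonempty x hx)
    (hΩ.volume_cross_ne_top x) (hΩ.cross_nonempty x' hx') (hΩ.volume_cross_ne_top x')
    fun _ hy _ hy' => hΩ.abs_sub_le_of_norm_gradient_le hu hK₀ hK hy hy'

lemma abs_lim_sub_ubarFn_le (hΩ : IsThinDomain ε Ω) (hu : DifferentiableOn ℝ u Ω)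
    {K L : ℝ} (hK₀ : 0 ≤ K) (hK : ∀ p ∈ Ω, p 0 ≤ x → ‖gradient u p‖ ≤ K)
    (hL : Tendsto (ubarFn Ω u) (𝓝[>] 0) (𝓝 L)) (hx : x ∈ Ioo 0 1) :
    |L - ubarFn Ω u x| ≤ K * (x + 2 * ε) := by
  refine le_of_tendsto (hL.sub_const _).abs ?_
  filter_upwards [Ioc_mem_nhdsGT hx.1] with x' hx'
  refine (hΩ.abs_ubarFn_sub_le_of_norm_gradient_le hu hK₀ (fun p hp hpx => hK p hp ?_)
    ⟨hx'.1, hx'.2.trans_lt hx.2⟩ hx).trans ?_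
  · exact (uIcc_of_le hx'.2 ▸ hpx).2
  · gcongr
    rw [abs_sub_comm, abs_of_nonneg (sub_nonneg.2 hx'.2)]
    linarith [hx'.1]

lemma abs_ubarFn_le (hΩ : IsThinDomain ε Ω) (hu : ContinuousOn u Ω) {S : ℝ}
    (hS : ∀ p ∈ Ω, |u p| ≤ S) (hx : x ∈ Ioo 0 1) : |ubarFn Ω u x| ≤ S :=
  abs_le.2 <| ubarFn_mem_of_forall_mem hΩ.isOpen hu (hΩ.cross_nonempty x hx)
    (hΩ.volume_cross_ne_top x) (convex_Icc (-S) S) isCompact_Icc fun _ hy => abs_le.1 (hS _ hy)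

end IsThinDomain

/-- The truncation `f₁` of a function `f` on `(0,1)`, constant on either side of `[ε, 1 - ε]`. -/
def endTruncation (ε : ℝ) (f : ℝ → ℝ) (x : ℝ) : ℝ :=
  if x < ε then f ε else if x ≤ 1 - ε then f x else f (1 - ε)

lemma measurable_endTruncation (ε : ℝ) {f : ℝ → ℝ} (hf : Measurable f) :
    Measurable (endTruncation ε f) :=
  Measurable.ite measurableSet_Iio measurable_const
    (Measurable.ite measurableSet_Iic hf measurable_const)

lemma IsThinDomain.abs_endTruncation_sub_le {m : ℕ} {Ω : Set (EuclideanSpace ℝ (Fin (m + 1)))}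
    {u : EuclideanSpace ℝ (Fin (m + 1)) → ℝ} {ε x K : ℝ} (hΩ : IsThinDomain ε Ω)
    (hu : DifferentiableOn ℝ u Ω) (hε : ε ∈ Ioo 0 1) (hK₀ : 0 ≤ K)
    (hK : ∀ p ∈ Ω, min (p 0) (1 - p 0) ≤ ε → ‖gradient u p‖ ≤ K) (hx : x ∈ Ioo 0 1) :
    |endTruncation ε (ubarFn Ω u) x - ubarFn Ω u x| ≤ 3 * K * ε := by
  have hε₀ := hε.1
  unfold endTruncation
  split_ifs with hleft hmid
  · refine (hΩ.abs_ubarFn_sub_le_of_norm_gradient_le hu hK₀ (fun p hp hpx => hK p hp ?_)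
      hε hx).trans ?_
    · exact min_le_of_left_le (uIcc_of_ge hleft.le ▸ hpx).2
    · rw [abs_of_nonneg (sub_nonneg.2 hleft.le)]
      nlinarith [hx.1]
  · rw [sub_self, abs_zero]
    positivity
  · have hright := not_le.1 hmid
    refine (hΩ.abs_ubarFn_sub_le_of_norm_gradient_le hu hK₀ (fun p hp hpx => hK p hp ?_)
      ⟨sub_pos.2 hε.2, sub_lt_self 1 hε₀⟩ hx).trans ?_
    · exact min_le_of_right_le (sub_le_comm.1 (uIcc_of_le hright.le ▸ hpx).1)
    · rw [abs_sub_comm, abs_of_nonneg (sub_nonneg.2 hright.le)]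
      nlinarith [hx.2]

/-- Since `f` has mean zero, its cross term with the constant `c` integrates to zero. -/
lemma integral_sq_sub_le_integral_sub_const_sq {α : Type*} [MeasurableSpace α] {μ : Measure α}
    [IsFiniteMeasure μ] {f g : α → ℝ} {S δ : ℝ} (hf : AEStronglyMeasurable f μ)
    (hg : AEStronglyMeasurable g μ) (hfS : ∀ᵐ x ∂μ, |f x| ≤ S) (hgf : ∀ᵐ x ∂μ, |g x - f x| ≤ δ)
    (hmean : ∫ x, f x ∂μ = 0) (c : ℝ) :
    ∫ x, f x ^ 2 ∂μ - 2 * S * δ * μ.real univ ≤ ∫ x, (g x - c) ^ 2 ∂μ := by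
  have hf₁ : MemLp f ⊤ μ := memLp_top_of_bound hf S hfS
  have hgf₁ : MemLp (fun x => g x - f x) ⊤ μ := memLp_top_of_bound (hg.sub hf) δ hgf
  have hf₂ : MemLp f 2 μ := hf₁.mono_exponent le_top
  have hgc : MemLp (fun x => g x - c) 2 μ := by
    refine (((hgf₁.add hf₁).sub (memLp_const c)).mono_exponent le_top).ae_eq ?_
    exact Eventually.of_forall fun x => by simp
  have hlin : Integrable (fun x => 2 * c * f x) μ := (hf₂.integrable one_le_two).const_mul _
  have hsq_sub : Integrable (fun x => f x ^ 2 - 2 * c * f x) μ := hf₂.integrable_sq.sub hlin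
  have hpoint : ∀ᵐ x ∂μ, f x ^ 2 - 2 * c * f x - 2 * S * δ ≤ (g x - c) ^ 2 := by
    filter_upwards [hfS, hgf] with x hxS hxδ
    have hprod : |f x * (g x - f x)| ≤ S * δ := by
      rw [abs_mul]
      exact mul_le_mul hxS hxδ (abs_nonneg _) ((abs_nonneg _).trans hxS)
    nlinarith [(abs_le.1 hprod).1, sq_nonneg (g x - f x - c)]
  calc ∫ x, f x ^ 2 ∂μ - 2 * S * δ * μ.real univ
      = ∫ x, (f x ^ 2 - 2 * c * f x - 2 * S * δ) ∂μ := by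
        rw [integral_sub hsq_sub (integrable_const _),
          integral_sub hf₂.integrable_sq hlin, integral_const_mul, hmean, integral_const,
          smul_eq_mul]
        ring
    _ ≤ ∫ x, (g x - c) ^ 2 ∂μ :=
        integral_mono_ae (hsq_sub.sub (integrable_const _)) hgc.integrable_sq hpoint

lemma sSup_nonneg_of_neg_sInf_le {A : Set ℝ} (hA : Bornology.IsBounded A) {C : ℝ} (hC : 0 ≤ C)
    (h : -sInf A ≤ C * sSup A) : 0 ≤ sSup A := by
  by_contra! hneg
  nlinarith [Real.sInf_le_sSup A hA.bddBelow hA.bddAbove]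

lemma abs_le_of_neg_sInf_le {A : Set ℝ} (hA : Bornology.IsBounded A) {C : ℝ} (hC : 0 ≤ C)
    (h : -sInf A ≤ C * sSup A) {r : ℝ} (hr : r ∈ A) : |r| ≤ (1 + C) * sSup A := by
  have hsup := sSup_nonneg_of_neg_sInf_le hA hC h
  have hle := le_csSup hA.bddAbove hr
  have hge := csInf_le hA.bddBelow hr
  exact abs_le.2 ⟨by linarith, by nlinarith⟩

/-- The distance from the left end within which the assumed gradient bound, with constant `C₀`,
keeps the cross-sectional average above half the supremum. -/
def endWidth (C₀ : ℝ) : ℝ := 1 / (4 * (1 + C₀))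

lemma endWidth_pos {C₀ : ℝ} (hC₀ : 0 ≤ C₀) : 0 < endWidth C₀ := by
  unfold endWidth
  positivity

lemma endWidth_mul {C₀ : ℝ} (hC₀ : 0 ≤ C₀) : endWidth C₀ * (1 + C₀) = 1 / 4 := by
  unfold endWidth
  field_simp

lemma endWidth_le {C₀ : ℝ} (hC₀ : 0 ≤ C₀) : endWidth C₀ ≤ 1 / 4 := by
  nlinarith [endWidth_mul hC₀, endWidth_pos hC₀]

namespace IsThinDomain

variable {m : ℕ} {Ω : Set (EuclideanSpace ℝ (Fin (m + 1)))}
  {u : EuclideanSpace ℝ (Fin (m + 1)) → ℝ} {ε C₀ M S L : ℝ}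

lemma half_le_ubarFn (hΩ : IsThinDomain ε Ω) (hu : DifferentiableOn ℝ u Ω) (hC₀ : 0 ≤ C₀)
    (hε : 0 < ε) (hεa : ε ≤ endWidth C₀) (hM : 0 ≤ M) (hS : 0 ≤ S) (hSM : S ≤ (1 + C₀) * M)
    (hgrad : ∀ p ∈ Ω, ‖gradient u p‖ ≤ C₀ * max (min (p 0) (1 - p 0)) ε * S)
    (hL : Tendsto (ubarFn Ω u) (𝓝[>] 0) (𝓝 L)) (hML : (1 - C₀ * ε) * M ≤ L)
    {x : ℝ} (hx : x ∈ Ioc 0 (endWidth C₀)) : M / 2 ≤ ubarFn Ω u x := by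
  obtain ⟨hx₀, hxa⟩ := hx
  have ha₀ := endWidth_pos hC₀
  have ha := endWidth_mul hC₀
  have ha' := endWidth_le hC₀
  set a := endWidth C₀
  have hgrad' : ∀ p ∈ Ω, p 0 ≤ x → ‖gradient u p‖ ≤ C₀ * a * S := by
    intro p hp hpx
    refine (hgrad p hp).trans ?_
    gcongr
    exact max_le (min_le_of_left_le (hpx.trans hxa)) hεa
  have hosc : |L - ubarFn Ω u x| ≤ 3 / 16 * M :=
    calc |L - ubarFn Ω u x| ≤ C₀ * a * S * (x + 2 * ε) :=
          hΩ.abs_lim_sub_ubarFn_le hu (by positivity) hgrad' hL ⟨hx₀, by linarith⟩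
      _ ≤ (1 + C₀) * a * ((1 + C₀) * M) * (a + 2 * a) := by
          gcongr
          linarith
      _ = 3 * M * (a * (1 + C₀)) ^ 2 := by ring
      _ = 3 / 16 * M := by rw [ha]; ring
  have hC₀ε : C₀ * ε ≤ 1 / 4 := by nlinarith
  nlinarith [(abs_le.1 hosc).2]

lemma measureReal_univ_mul_sq_le_integral_sq (hΩ : IsThinDomain ε Ω) (hC₀ : 0 ≤ C₀)
    (hM : 0 ≤ M) (hS : 0 ≤ S) (hSM : S ≤ (1 + C₀) * M) {f : ℝ → ℝ}
    (hf : Integrable (fun x => f x ^ 2) (sectionMeasure Ω))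
    (hMf : ∀ x ∈ Ioc 0 (endWidth C₀), M / 2 ≤ f x) :
    (endWidth C₀ / 2) ^ (m + 1) * (sectionMeasure Ω).real univ * S ^ 2 ≤
      4 * (1 + C₀) ^ 2 * ∫ x, f x ^ 2 ∂sectionMeasure Ω := by
  have ha₀ := endWidth_pos hC₀
  have ha₁ := endWidth_le hC₀
  calc (endWidth C₀ / 2) ^ (m + 1) * (sectionMeasure Ω).real univ * S ^ 2
      ≤ (endWidth C₀ / 2) ^ (m + 1) * (sectionMeasure Ω).real univ * ((1 + C₀) * M) ^ 2 := by
        gcongr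
    _ = 4 * (1 + C₀) ^ 2 *
        ((endWidth C₀ / 2) ^ (m + 1) * (sectionMeasure Ω).real univ * (M / 2) ^ 2) := by ring
    _ ≤ 4 * (1 + C₀) ^ 2 * ∫ x, f x ^ 2 ∂sectionMeasure Ω := by
        gcongr
        exact hΩ.pow_mul_measureReal_univ_mul_sq_le_integral_sq (by positivity) (by linarith)
          (by positivity) hf fun x hx => hMf x ⟨by linarith [hx.1], by linarith [hx.2]⟩

end IsThinDomain

lemma IsThinDomain.one_sub_mul_integral_ubarFn_sq_le {m : ℕ}
    {Ω : Set (EuclideanSpace ℝ (Fin (m + 1)))} {u : EuclideanSpace ℝ (Fin (m + 1)) → ℝ}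
    {ε C₀ M S L : ℝ} (hΩ : IsThinDomain ε Ω) (hu : DifferentiableOn ℝ u Ω) (hC₀ : 0 ≤ C₀)
    (hε : 0 < ε) (hεa : ε ≤ endWidth C₀) (hM : 0 ≤ M) (hS : 0 ≤ S) (hSM : S ≤ (1 + C₀) * M)
    (huS : ∀ p ∈ Ω, |u p| ≤ S) (hmean : ∫ p in Ω, u p = 0)
    (hgrad : ∀ p ∈ Ω, ‖gradient u p‖ ≤ C₀ * max (min (p 0) (1 - p 0)) ε * S)
    (hL : Tendsto (ubarFn Ω u) (𝓝[>] 0) (𝓝 L)) (hML : (1 - C₀ * ε) * M ≤ L) (c : ℝ) :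
    (1 - 24 * C₀ * (1 + C₀) ^ 2 / (endWidth C₀ / 2) ^ (m + 1) * ε ^ 2) *
        ∫ x, ubarFn Ω u x ^ 2 ∂sectionMeasure Ω ≤
      ∫ x, (endTruncation ε (ubarFn Ω u) x - c) ^ 2 ∂sectionMeasure Ω := by
  have := hΩ.isFiniteMeasure_sectionMeasure
  have hΩm := hΩ.isOpen.measurableSet
  have ha₀ := endWidth_pos hC₀
  have hε₁ : ε < 1 := by linarith [endWidth_le hC₀]
  have hmeas : Measurable (ubarFn Ω u) := hΩ.measurable_ubarFn hu.continuousOn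
  have hbound : ∀ᵐ x ∂sectionMeasure Ω, |ubarFn Ω u x| ≤ S :=
    hΩ.ae_sectionMeasure_mem_Ioo.mono fun x hx => hΩ.abs_ubarFn_le hu.continuousOn huS hx
  have hmean' : ∫ x, ubarFn Ω u x ∂sectionMeasure Ω = 0 := by
    rw [integral_ubarFn_sectionMeasure hΩm hΩ.volume_cross_ne_top, hmean]
    exact .of_bound hΩ.volume_ne_top.lt_top (hu.continuousOn.aestronglyMeasurable hΩm) S
      ((ae_restrict_iff' hΩm).2 (Eventually.of_forall huS))
  have hclose : ∀ᵐ x ∂sectionMeasure Ω,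
      |endTruncation ε (ubarFn Ω u) x - ubarFn Ω u x| ≤ 3 * (C₀ * ε * S) * ε := by
    refine hΩ.ae_sectionMeasure_mem_Ioo.mono fun x hx =>
      hΩ.abs_endTruncation_sub_le hu ⟨hε, hε₁⟩ (by positivity) (fun p hp hpε => ?_) hx
    exact max_eq_right hpε ▸ hgrad p hp
  have hmass := hΩ.measureReal_univ_mul_sq_le_integral_sq hC₀ hM hS hSM
    ((memLp_top_of_bound hmeas.aestronglyMeasurable S hbound).mono_exponent le_top).integrable_sq
    fun x hx => hΩ.half_le_ubarFn hu hC₀ hε hεa hM hS hSM hgrad hL hML hx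
  set κ := (endWidth C₀ / 2) ^ (m + 1)
  have hκ : 0 < κ := by positivity
  set I := ∫ x, ubarFn Ω u x ^ 2 ∂sectionMeasure Ω
  set W := (sectionMeasure Ω).real univ
  calc (1 - 24 * C₀ * (1 + C₀) ^ 2 / κ * ε ^ 2) * I
      = I - 6 * C₀ * ε ^ 2 / κ * (4 * (1 + C₀) ^ 2 * I) := by ring
    _ ≤ I - 6 * C₀ * ε ^ 2 / κ * (κ * W * S ^ 2) := by gcongr
    _ = I - 2 * S * (3 * (C₀ * ε * S) * ε) * W := by field_simp; ring
    _ ≤ ∫ x, (endTruncation ε (ubarFn Ω u) x - c) ^ 2 ∂sectionMeasure Ω :=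
        integral_sq_sub_le_integral_sub_const_sq hmeas.aestronglyMeasurable
          (measurable_endTruncation ε hmeas).aestronglyMeasurable hbound hclose hmean' c

theorem truncated_average_keeps_mass_general (m : ℕ) (C₀ : ℝ) (hC₀ : 0 < C₀) :
    ∃ C > (0 : ℝ), ∃ ε₀ ∈ Ioc (0 : ℝ) 1,
    ∀ (ε : ℝ) (Ω : Set (EuclideanSpace ℝ (Fin (m + 1))))
      (u : EuclideanSpace ℝ (Fin (m + 1)) → ℝ) (L : ℝ),
      0 < ε → ε < ε₀ → IsThinDomain ε Ω →
      DifferentiableOn ℝ u Ω → Bornology.IsBounded (u '' Ω) → (∫ p in Ω, u p) = 0 →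
      (∀ p ∈ Ω, ‖gradient u p‖ ≤
        C₀ * max (min (p 0) (1 - p 0)) ε * sSup ((fun q => |u q|) '' Ω)) →
      -sInf (u '' Ω) ≤ C₀ * sSup (u '' Ω) →
      Tendsto (ubarFn Ω u) (𝓝[>] 0) (𝓝 L) →
      (1 - C₀ * ε) * sSup (u '' Ω) ≤ L →
      ∀ c : ℝ, (1 - C * ε ^ 2) * (∫ x in (0 : ℝ)..1, ωvol Ω x * ubarFn Ω u x ^ 2) ≤
        ∫ x in (0 : ℝ)..1, ωvol Ω x * (endTruncation ε (ubarFn Ω u) x - c) ^ 2 := by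
  have ha₀ := endWidth_pos hC₀.le
  refine ⟨24 * C₀ * (1 + C₀) ^ 2 / (endWidth C₀ / 2) ^ (m + 1), by positivity,
    endWidth C₀, ⟨ha₀, by linarith [endWidth_le hC₀.le]⟩, ?_⟩
  intro ε Ω u L hε hεa hΩ hu hbdd hmean hgrad hinf hL hML c
  have hM := sSup_nonneg_of_neg_sInf_le hbdd hC₀.le hinf
  have hupper : (1 + C₀) * sSup (u '' Ω) ∈ upperBounds ((fun q => |u q|) '' Ω) :=
    forall_mem_image.2 fun p hp =>
      abs_le_of_neg_sInf_le hbdd hC₀.le hinf (mem_image_of_mem u hp)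
  rw [hΩ.intervalIntegral_ωvol_mul, hΩ.intervalIntegral_ωvol_mul]
  exact hΩ.one_sub_mul_integral_ubarFn_sq_le hu hC₀.le hε hεa.le hM
    (Real.sSup_nonneg (forall_mem_image.2 fun p _ => abs_nonneg (u p)))
    (Real.sSup_le hupper (by positivity))
    (fun p hp => le_csSup ⟨_, hupper⟩ (mem_image_of_mem _ hp)) hmean hgrad hL hML c

/-- The truncated and recentered average `ū₁^⊥` keeps most of the `L²` mass:
`∫ ω (ū₁^⊥)² ≥ (1 - Cε) ∫ ω ū²`. -/
theorem truncated_average_keeps_mass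
    (m : ℕ) (hm : 1 ≤ m) (c₀ C₀ : ℝ) (hc₀ : 0 < c₀) (hC₀ : 0 < C₀) :
    ∃ C > (0:ℝ), ∃ ε₀ > (0:ℝ),
    ∀ (ε : ℝ) (Ω : Set (EuclideanSpace ℝ (Fin (m+1))))
      (u : EuclideanSpace ℝ (Fin (m+1)) → ℝ) (lam L0 L1 : ℝ),
      0 < ε → ε < ε₀ →
      IsOpen Ω → Convex ℝ Ω → Bornology.IsBounded Ω →
      -- smooth boundary
      (∃ F : EuclideanSpace ℝ (Fin (m+1)) → ℝ, ContDiff ℝ (⊤:ℕ∞) F ∧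
        Ω = {p | F p < 0} ∧ frontier Ω = {p | F p = 0} ∧
        ∀ p ∈ frontier Ω, gradient F p ≠ 0) →
      -- Ω ⊆ (0,1) × B^{n-1}(ε)
      (∀ x y, mkPt m x y ∈ Ω →
        x ∈ Ioo (0:ℝ) 1 ∧ y ∈ Metric.ball (0 : EuclideanSpace ℝ (Fin m)) ε) →
      -- nonempty cross-sections
      (∀ s ∈ Ioo (0:ℝ) 1, (cross Ω s).Nonempty) →
      -- u is a nonzero mean-zero smooth Neumann eigenfunction with eigenvalue lam
      ContDiffOn ℝ (⊤:ℕ∞) u (closure Ω) →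
      (∃ p ∈ Ω, u p ≠ 0) →
      (∫ p in Ω, u p) = 0 →
      (∀ p ∈ Ω, lap u p = -(lam * u p)) →
      (∀ p ∈ frontier Ω, ∀ v, (∀ z ∈ Ω, ⟪v, z - p⟫ ≤ 0) → ⟪gradient u p, v⟫ = 0) →
      0 < lam →
      -- facts from [CJK2009], assumed as hypotheses
      (∀ p ∈ Ω, ‖gradient u p‖ ≤
        C₀ * max (min (p 0) (1 - p 0)) ε * sSup ((fun q => |u q|) '' Ω)) →
      c₀ * sSup (u '' Ω) ≤ -sInf (u '' Ω) →
      -sInf (u '' Ω) ≤ C₀ * sSup (u '' Ω) →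
      Tendsto (ubarFn Ω u) (𝓝[>] 0) (𝓝 L0) →
      (1 - C₀ * ε) * sSup (u '' Ω) ≤ L0 →
      Tendsto (ubarFn Ω u) (𝓝[<] 1) (𝓝 L1) →
      L1 ≤ (1 - C₀ * ε) * sInf (u '' Ω) →
      -- ū₁: truncation of ū; ū₁⁰: its ω-weighted mean; ū₁^⊥ = ū₁ - ū₁⁰
      ∀ (ub1 : ℝ → ℝ) (ub10 : ℝ),
      (∀ x, ub1 x = if x < ε then ubarFn Ω u ε
        else if x ≤ 1 - ε then ubarFn Ω u x else ubarFn Ω u (1 - ε)) →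
      ub10 = (∫ x in (0:ℝ)..1, ωvol Ω x * ub1 x) / (∫ x in (0:ℝ)..1, ωvol Ω x) →
      (1 - C * ε) * (∫ x in (0:ℝ)..1, ωvol Ω x * (ubarFn Ω u x) ^ 2)
        ≤ ∫ x in (0:ℝ)..1, ωvol Ω x * (ub1 x - ub10) ^ 2 := by
  obtain ⟨C, hC, ε₀, ⟨hε₀, hε₀'⟩, hgeneral⟩ := truncated_average_keeps_mass_general m C₀ hC₀
  refine ⟨C, hC, ε₀, hε₀, ?_⟩
  intro ε Ω u _ L0 _ hε hεε₀ hopen hconv hbdd _ hcyl hne hu _ hmean _ _ _ hgrad _ hinf hL0 hL0' _ _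
    ub1 ub10 hub1 _
  obtain rfl : ub1 = endTruncation ε (ubarFn Ω u) := funext hub1
  have hthin : IsThinDomain ε Ω := ⟨hopen, hconv, hcyl, hne⟩
  have hmain := hgeneral ε Ω u L0 hε hεε₀ hthin
    ((hu.differentiableOn (by simp)).mono subset_closure)
    ((hbdd.isCompact_closure.image_of_continuousOn hu.continuousOn).isBounded.subset
      (image_mono subset_closure)) hmean hgrad hinf hL0 hL0' ub10
  refine le_trans ?_ hmain
  rw [hthin.intervalIntegral_ωvol_mul]
  gcongr
  exact pow_le_of_le_one hε.le (hεε₀.le.trans hε₀') two_ne_zero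
end
end
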